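/- Convergence of the alternating minimization iterates: if (U^{(k)})_{k≥0} and (V^{(k)})_{k≥0} are alternating-minimization iterates for f, then there exist U* ∈ ℝ^{m×r} and V* ∈ ℝ^{r×n} such that U^{(k)} → U* and V^{(k)} → V* as k → ∞. -/

import Mathlib

open Finset Matrix

/-- Squared Frobenius norm: `frobSq X = ‖X‖_F²`. -/
noncomputable def frobSq {a b : ℕ} (X : Matrix (Fin a) (Fin b) ℝ) : ℝ :=
  ∑ i, ∑ j, (X i j) ^ 2

/-- The matrix-completion objective
`f(U,V) = (1/2)(‖U‖_F² + ‖V‖_F²) + (μ/2) ∑_{(i,j)∈Ω} ((UV − M)_{ij})² + (ν/2) ‖L(UV) − b‖²`. -/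
noncomputable def objF {m n r p : ℕ} (Ω : Finset (Fin m × Fin n)) (M : Matrix (Fin m) (Fin n) ℝ)
    (L : Matrix (Fin m) (Fin n) ℝ →ₗ[ℝ] EuclideanSpace ℝ (Fin p))
    (b : EuclideanSpace ℝ (Fin p)) (μ ν : ℝ)
    (U : Matrix (Fin m) (Fin r) ℝ) (V : Matrix (Fin r) (Fin n) ℝ) : ℝ :=
  (1 / 2) * (frobSq U + frobSq V)
    + (μ / 2) * ∑ ij ∈ Ω, ((U * V - M) ij.1 ij.2) ^ 2
    + (ν / 2) * ‖L (U * V) - b‖ ^ 2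

/-!
Let `f` be the polynomial `objF` minus its limiting value along the iterates, which the quadratic
regularization keeps bounded. It satisfies a Łojasiewicz gradient inequality: `f ^ θ ≤ C * ‖∇f‖`
with `θ < 1`, on bounded sets, wherever `f` is positive and small. Strong convexity in each block
makes a minimization sweep of length `d` lower the objective by a multiple of `d ^ 2`; block
optimality and the Lipschitz gradient bound the gradient after the sweep by a multiple of `d`.
Comparing the two through the concavity of `s ^ (1 - θ)` makes the lengths summable.

The Łojasiewicz inequality has an algebraic proof. A polynomial `F ≠ 0` over a field `K` of
characteristic zero is a unit in the ring `B = K[x, ∂F / F]`. Otherwise the normalization of `B`,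
localized at a minimal prime over `F`, is a discrete valuation ring whose maximal ideal `(π)`
contains `F`, say with order `e ≥ 1`.
Modulo `π ^ (e + 1)` the elements of that ring are polynomials in `π` over the residue field,
because extensions of fields of characteristic zero are formally smooth. There the chain rule turns
`F ∣ ∂ᵢF` into `X ^ e ∣ F'`, but differentiation lowers the order `e` of `F` by exactly one.
So `F * q(x, ∂F / F) = 1` for a polynomial `q`. On bounded sets this gives
`1 ≤ F * C * (1 + ‖∇F‖ / F) ^ N`, which is the gradient inequality with `θ = N / (N + 1)`, after
increasing `N` and `C`.
-/

section FormalSmoothness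

theorem derivation_mvPolynomial_aeval {K R M σ : Type*} [Fintype σ] [CommRing K] [CommRing R]
    [AddCommGroup M] [Algebra K R] [Module K M] [Module R M]
    (D : Derivation K R M) (a : σ → R) (F : MvPolynomial σ K) :
    D (MvPolynomial.aeval a F) =
      ∑ i, MvPolynomial.aeval a (MvPolynomial.pderiv i F) • D (a i) := by
  classical
  induction F using MvPolynomial.induction_on with
  | C c => simp
  | add p q hp hq => simp [hp, hq, add_smul, sum_add_distrib]
  | mul_X p i hp =>
    simp [hp, MvPolynomial.pderiv_X, Pi.single_apply, apply_ite, ite_smul, add_smul,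
      sum_add_distrib, smul_sum, mul_smul]

theorem formallySmooth_of_charZero (K L : Type*) [Field K] [CharZero K] [Field L] [Algebra K L] :
    Algebra.FormallySmooth K L := by
  obtain ⟨s, hs⟩ := exists_isTranscendenceBasis K L
  have := hs.isAlgebraic_field
  have : CharZero (IntermediateField.adjoin K (Set.range ((↑) : s → L))) :=
    charZero_of_injective_algebraMap (algebraMap K _).injective
  exact .of_algebraicIndependent_of_isSeparable hs.1

open IsLocalRing in
theorem exists_algHom_residue_rightInverse (K : Type*) {A : Type*} [Field K] [CharZero K]
    [CommRing A] [IsLocalRing A] [Algebra K A] (hnil : IsNilpotent (maximalIdeal A)) :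
    ∃ s : ResidueField A →ₐ[K] A, Function.RightInverse s (residue A) := by
  let res : A →ₐ[K] ResidueField A := IsScalarTower.toAlgHom K A (ResidueField A)
  have hres : Function.Surjective res := residue_surjective
  have hker : IsNilpotent (RingHom.ker (res : A →+* ResidueField A)) := by
    change IsNilpotent (RingHom.ker (residue A))
    rwa [ker_residue]
  have := formallySmooth_of_charZero K (ResidueField A)
  exact ⟨Algebra.FormallySmooth.liftOfSurjective (AlgHom.id K _) res hres hker,
    Algebra.FormallySmooth.liftOfSurjective_apply (AlgHom.id K _) res hres hker⟩

open IsLocalRing Polynomial in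
theorem exists_algHom_residueField_surjective {K A : Type*} [Field K] [CharZero K] [CommRing A]
    [IsLocalRing A] [Algebra K A] {π : A} (hπ : maximalIdeal A = Ideal.span {π})
    (hnil : IsNilpotent π) :
    ∃ φ : (ResidueField A)[X] →ₐ[K] A, Function.Surjective φ ∧ φ X = π := by
  obtain ⟨n, hn⟩ := hnil
  obtain ⟨s, hs⟩ := exists_algHom_residue_rightInverse K (A := A)
    ⟨n, by rw [hπ, Ideal.span_singleton_pow, hn]; simp⟩
  have hdiv (z : A) : ∃ w, z = s (residue A z) + π * w := by
    have : z - s (residue A z) ∈ maximalIdeal A := by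
      rw [← residue_eq_zero_iff, map_sub, hs, sub_self]
    rw [hπ, Ideal.mem_span_singleton] at this
    obtain ⟨w, hw⟩ := this
    exact ⟨w, by rw [← hw]; ring⟩
  have happrox (j : ℕ) (y : A) : ∃ p z, y = aevalTower s π p + π ^ j * z := by
    induction j with
    | zero => exact ⟨0, y, by simp⟩
    | succ j ih =>
      obtain ⟨p, z, hz⟩ := ih
      obtain ⟨w, hw⟩ := hdiv z
      refine ⟨p + X ^ j * C (residue A z), w, ?_⟩
      simp only [map_add, map_mul, map_pow, aevalTower_X, aevalTower_C]
      linear_combination hz + π ^ j * hw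
  refine ⟨aevalTower s π, fun y => ?_, aevalTower_X s π⟩
  obtain ⟨p, z, h⟩ := happrox n y
  exact ⟨p, by simp [h, hn]⟩

theorem ker_eq_span_prime_pow_succ {R S : Type*} [CommRing R] [IsDomain R] [IsPrincipalIdealRing R]
    [CommRing S] (φ : R →+* S) {p : R} (hp : Prime p) {e : ℕ} (hne : φ (p ^ e) ≠ 0)
    (hzero : φ (p ^ (e + 1)) = 0) : RingHom.ker φ = Ideal.span {p ^ (e + 1)} := by
  obtain ⟨d, hd⟩ := IsPrincipalIdealRing.principal (RingHom.ker φ)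
  have hmem (x : R) : φ x = 0 ↔ d ∣ x := by
    rw [← RingHom.mem_ker, hd, ← Ideal.mem_span_singleton, Ideal.submodule_span_eq]
  obtain ⟨j, hj, hdj⟩ := (dvd_prime_pow hp _).1 ((hmem _).1 hzero)
  have hje : ¬ j ≤ e := fun h => hne ((hmem _).2 (hdj.dvd.trans (pow_dvd_pow p h)))
  obtain rfl : j = e + 1 := by omega
  rw [hd, Ideal.submodule_span_eq, Ideal.span_singleton_eq_span_singleton]
  exact hdj

theorem dvd_of_map_dvd_map {R S : Type*} [CommRing R] [CommRing S] {φ : R →+* S}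
    (hφ : Function.Surjective φ) {d y : R} (hker : RingHom.ker φ ≤ Ideal.span {d})
    (h : φ d ∣ φ y) : d ∣ y := by
  obtain ⟨c, hc⟩ := h
  obtain ⟨c, rfl⟩ := hφ c
  have : y - d * c ∈ RingHom.ker φ := by simp [RingHom.mem_ker, hc]
  exact (dvd_sub_left (dvd_mul_right d c)).1 (Ideal.mem_span_singleton.1 (hker this))

open Polynomial in
theorem X_pow_succ_dvd_of_dvd_derivative {R : Type*} [CommRing R] [IsDomain R] [CharZero R]
    {p : R[X]} {e : ℕ} (he : e ≠ 0) (h : X ^ e ∣ p) (h' : X ^ e ∣ derivative p) :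
    X ^ (e + 1) ∣ p := by
  obtain ⟨q, rfl⟩ := h
  obtain ⟨k, rfl⟩ := Nat.exists_eq_succ_of_ne_zero he
  rw [derivative_mul, dvd_add_left (dvd_mul_right _ _), derivative_X_pow, Nat.succ_sub_one,
    mul_right_comm, mul_comm, pow_succ, mul_dvd_mul_iff_left (pow_ne_zero _ X_ne_zero), X_dvd_iff,
    coeff_C_mul, mul_eq_zero_iff_left (by exact_mod_cast k.succ_ne_zero)] at h'
  rw [pow_succ]
  exact mul_dvd_mul_left _ (X_dvd_iff.2 h')

open IsLocalRing in
theorem aeval_eq_zero_of_pow_dvd_pderiv {K A σ : Type*} [Field K] [CharZero K] [Finite σ]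
    [CommRing A] [IsLocalRing A] [Algebra K A] {π : A} (hπ : maximalIdeal A = Ideal.span {π})
    {e : ℕ} (he : e ≠ 0) (hne : π ^ e ≠ 0) (hzero : π ^ (e + 1) = 0)
    (F : MvPolynomial σ K) (a : σ → A) (hF : π ^ e ∣ MvPolynomial.aeval a F)
    (hdF : ∀ i, π ^ e ∣ MvPolynomial.aeval a (MvPolynomial.pderiv i F)) :
    MvPolynomial.aeval a F = 0 := by
  have := Fintype.ofFinite σ
  obtain ⟨φ, hφ, hX⟩ := exists_algHom_residueField_surjective (K := K) hπ ⟨e + 1, hzero⟩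
  have hker := ker_eq_span_prime_pow_succ (φ : Polynomial (ResidueField A) →+* A)
    Polynomial.prime_X (e := e) (by simpa [hX] using hne) (by simpa [hX] using hzero)
  choose P hP using fun i => hφ (a i)
  have hcomp (G : MvPolynomial σ K) : φ (MvPolynomial.aeval P G) = MvPolynomial.aeval a G := by
    simp only [MvPolynomial.comp_aeval_apply, hP]
  have hdvd (G : MvPolynomial σ K) (hG : π ^ e ∣ MvPolynomial.aeval a G) :
      Polynomial.X ^ e ∣ MvPolynomial.aeval P G := by
    refine dvd_of_map_dvd_map (φ := (φ : Polynomial (ResidueField A) →+* A)) hφ ?_ ?_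
    · rw [hker, Ideal.span_singleton_le_span_singleton]
      exact pow_dvd_pow _ e.le_succ
    · rwa [RingHom.coe_coe, hcomp, map_pow, hX]
  have hderiv : Polynomial.X ^ e ∣ Polynomial.derivative (MvPolynomial.aeval P F) := by
    have := derivation_mvPolynomial_aeval (Polynomial.derivative'.restrictScalars K) P F
    change Polynomial.derivative _ = _ at this
    rw [this]
    exact dvd_sum fun i _ => (hdvd _ (hdF i)).mul_right _
  have : CharZero (ResidueField A) :=
    charZero_of_injective_algebraMap (algebraMap K (ResidueField A)).injective
  obtain ⟨Q, hQ⟩ := X_pow_succ_dvd_of_dvd_derivative he (hdvd F hF) hderiv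
  rw [← hcomp, hQ, map_mul, map_pow, hX, hzero, zero_mul]

end FormalSmoothness

section Normalization

open IsLocalRing in
theorem isUnit_aeval_of_dvd_pderiv_of_isDiscreteValuationRing {K O σ : Type*} [Field K]
    [CharZero K] [Finite σ] [CommRing O] [IsDomain O] [IsDiscreteValuationRing O] [Algebra K O]
    (F : MvPolynomial σ K) (a : σ → O) (hF : MvPolynomial.aeval a F ≠ 0)
    (hdF : ∀ i, MvPolynomial.aeval a F ∣ MvPolynomial.aeval a (MvPolynomial.pderiv i F)) :
    IsUnit (MvPolynomial.aeval a F) := by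
  obtain ⟨π, hπ⟩ := IsDiscreteValuationRing.exists_irreducible O
  obtain ⟨e, u, hu⟩ := IsDiscreteValuationRing.eq_unit_mul_pow_irreducible hF hπ
  by_cases he : e = 0
  · simp [hu, he]
  let A := O ⧸ Ideal.span {π ^ (e + 1)}
  let mk : O →ₐ[K] A := Ideal.Quotient.mkₐ K _
  have hmk : Function.Surjective mk := Ideal.Quotient.mkₐ_surjective _ _
  have hmk_zero (x : O) : mk x = 0 ↔ π ^ (e + 1) ∣ x :=
    Ideal.Quotient.eq_zero_iff_mem.trans Ideal.mem_span_singleton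
  have hnot_dvd : ¬ π ^ (e + 1) ∣ π ^ e := by
    rw [pow_dvd_pow_iff hπ.ne_zero hπ.not_isUnit]
    omega
  have : Nontrivial A := nontrivial_of_ne (mk (π ^ e)) 0 (by rwa [Ne, hmk_zero])
  have : IsLocalRing A := .of_surjective' (mk : O →+* A) hmk
  have hmax : maximalIdeal A = Ideal.span {mk π} := by
    rw [← map_maximalIdeal_of_surjective (mk : O →+* A) hmk, hπ.maximalIdeal_eq, Ideal.map_span,
      Set.image_singleton, RingHom.coe_coe]
  have hdvd : mk π ^ e ∣ mk (MvPolynomial.aeval a F) := by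
    simp [hu]
  have hzero := aeval_eq_zero_of_pow_dvd_pderiv hmax he
    (by rwa [← map_pow, Ne, hmk_zero]) (by rw [← map_pow, hmk_zero]) F (fun i => mk (a i))
    (by rwa [← MvPolynomial.comp_aeval_apply])
    (fun i => by
      rw [← MvPolynomial.comp_aeval_apply]
      exact hdvd.trans (map_dvd mk (hdF i)))
  rw [← MvPolynomial.comp_aeval_apply, hmk_zero, hu, Units.dvd_mul_left] at hzero
  exact absurd hzero hnot_dvd

theorem isDiscreteValuationRing_localization_atPrime {C : Type*} [CommRing C] [IsDomain C]
    [IsNoetherianRing C] [IsIntegrallyClosed C] (P : Ideal C) [P.IsPrime] (hP : P ≠ ⊥)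
    (hheight : P.height ≤ 1) : IsDiscreteValuationRing (Localization.AtPrime P) := by
  have : IsNoetherianRing (Localization.AtPrime P) :=
    IsLocalization.isNoetherianRing P.primeCompl _ inferInstance
  have : IsIntegrallyClosed (Localization.AtPrime P) :=
    isIntegrallyClosed_of_isLocalization _ P.primeCompl P.primeCompl_le_nonZeroDivisors
  have hdim : Ring.KrullDimLE 1 (Localization.AtPrime P) := by
    rw [Ring.krullDimLE_iff, IsLocalization.AtPrime.ringKrullDim_eq_height P]
    exact_mod_cast hheight
  have hnotField : ¬ IsField (Localization.AtPrime P) :=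
    IsLocalization.AtPrime.not_isField C hP _
  have hmax : IsLocalRing.maximalIdeal (Localization.AtPrime P) ≠ ⊥ :=
    IsLocalRing.isField_iff_maximalIdeal_eq.not.1 hnotField
  have hiff := (IsDiscreteValuationRing.TFAE (Localization.AtPrime P) hnotField).out 0 3
  exact hiff.2 ⟨inferInstance, IsLocalRing.maximalIdeal _, ⟨hmax, inferInstance⟩,
    fun Q ⟨hQ, hQprime⟩ => IsLocalRing.eq_maximalIdeal
      (Ring.krullDimLE_one_iff_of_noZeroDivisors.1 hdim Q hQ hQprime)⟩

theorem isUnit_aeval_of_dvd_pderiv_of_isIntegrallyClosed {K C σ : Type*} [Field K] [CharZero K]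
    [Finite σ] [CommRing C] [IsDomain C] [IsNoetherianRing C] [IsIntegrallyClosed C] [Algebra K C]
    (F : MvPolynomial σ K) (a : σ → C) (hF : MvPolynomial.aeval a F ≠ 0)
    (hdF : ∀ i, MvPolynomial.aeval a F ∣ MvPolynomial.aeval a (MvPolynomial.pderiv i F)) :
    IsUnit (MvPolynomial.aeval a F) := by
  by_contra hunit
  obtain ⟨P, hPmin⟩ := Ideal.nonempty_minimalPrimes (Ideal.span_singleton_eq_top.not.2 hunit)
  have hprime : P.IsPrime := hPmin.1.1
  have hFP : MvPolynomial.aeval a F ∈ P := hPmin.1.2 (Ideal.mem_span_singleton_self _)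
  have := isDiscreteValuationRing_localization_atPrime P
    (Submodule.ne_bot_iff _ |>.2 ⟨_, hFP, hF⟩)
    (Ideal.height_le_one_of_isPrincipal_of_mem_minimalPrimes _ _ hPmin)
  let ψ : C →ₐ[K] Localization.AtPrime P := IsScalarTower.toAlgHom K C _
  have hψ : Function.Injective ψ :=
    IsLocalization.injective _ P.primeCompl_le_nonZeroDivisors
  have hψunit := isUnit_aeval_of_dvd_pderiv_of_isDiscreteValuationRing F (fun i => ψ (a i))
    (by rwa [← MvPolynomial.comp_aeval_apply, map_ne_zero_iff ψ hψ])
    (fun i => by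
      rw [← MvPolynomial.comp_aeval_apply, ← MvPolynomial.comp_aeval_apply]
      exact map_dvd ψ (hdF i))
  rw [← MvPolynomial.comp_aeval_apply] at hψunit
  exact (IsLocalization.AtPrime.isUnit_to_map_iff _ P _).1 hψunit hFP

theorem isNoetherianRing_integralClosure_fractionRing (K B : Type*) [Field K] [CharZero K]
    [CommRing B] [IsDomain B] [Algebra K B] [Algebra.FiniteType K B] :
    IsNoetherianRing (integralClosure B (FractionRing B)) := by
  obtain ⟨s, g, hinj, hfin⟩ := exists_finite_inj_algHom_of_fg K B
  let A := MvPolynomial (Fin s) K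
  let : Algebra A B := g.toRingHom.toAlgebra
  have : Module.Finite A B := hfin
  have : FaithfulSMul A B := (faithfulSMul_iff_algebraMap_injective A B).2 hinj
  let := FractionRing.liftAlgebra A (FractionRing B)
  have : IsScalarTower A (FractionRing A) (FractionRing B) :=
    FractionRing.isScalarTower_liftAlgebra A (FractionRing B)
  have : FiniteDimensional (FractionRing A) (FractionRing B) :=
    .of_isLocalization A B (nonZeroDivisors A)
  have : CharZero A := charZero_of_injective_algebraMap (algebraMap K A).injective
  have : CharZero (FractionRing A) :=
    charZero_of_injective_algebraMap (IsFractionRing.injective A (FractionRing A))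
  have : IsIntegralClosure (integralClosure B (FractionRing B)) A (FractionRing B) :=
    ⟨Subtype.val_injective, fun {x} => ⟨fun hx => ⟨⟨x, hx.tower_top⟩, rfl⟩,
      fun ⟨y, hy⟩ => hy ▸ isIntegral_trans (R := A) (A := B) _ y.2⟩⟩
  exact IsIntegralClosure.isNoetherianRing A (FractionRing A) (FractionRing B) _

theorem isUnit_aeval_of_dvd_pderiv {K B σ : Type*} [Field K] [CharZero K] [Finite σ]
    [CommRing B] [IsDomain B] [Algebra K B] [Algebra.FiniteType K B]
    (F : MvPolynomial σ K) (a : σ → B) (hF : MvPolynomial.aeval a F ≠ 0)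
    (hdF : ∀ i, MvPolynomial.aeval a F ∣ MvPolynomial.aeval a (MvPolynomial.pderiv i F)) :
    IsUnit (MvPolynomial.aeval a F) := by
  let C := integralClosure B (FractionRing B)
  have : IsNoetherianRing C := isNoetherianRing_integralClosure_fractionRing K B
  have : IsIntegrallyClosed C :=
    integralClosure.isIntegrallyClosedOfFiniteExtension (FractionRing B)
  let ι : B →ₐ[K] C := IsScalarTower.toAlgHom K B C
  have hι : Function.Injective ι := FaithfulSMul.algebraMap_injective B C
  refine (isUnit_map_iff (algebraMap B C) _).1 (?_ : IsUnit (ι _))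
  have := isUnit_aeval_of_dvd_pderiv_of_isIntegrallyClosed F (fun i => ι (a i))
    (by rwa [← MvPolynomial.comp_aeval_apply, map_ne_zero_iff ι hι])
    (fun i => by
      rw [← MvPolynomial.comp_aeval_apply, ← MvPolynomial.comp_aeval_apply]
      exact map_dvd ι (hdF i))
  rwa [← MvPolynomial.comp_aeval_apply] at this

end Normalization

section UnitRepresentation

open MvPolynomial

variable {K σ : Type*} [Field K] [CharZero K] [Finite σ]

theorem exists_aeval_mul_aeval_logDeriv_eq_one {L : Type*} [CommRing L] [IsDomain L] [Algebra K L]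
    (F : MvPolynomial σ K) (a : σ → L) {w : L} (hw : aeval a F * w = 1) :
    ∃ q : MvPolynomial (σ ⊕ σ) K,
      aeval a F * aeval (Sum.elim a fun i => aeval a (pderiv i F) * w) q = 1 := by
  set v : σ ⊕ σ → L := Sum.elim a fun i => aeval a (pderiv i F) * w
  let B : Subalgebra K L := (aeval (R := K) v).range
  have : Algebra.FiniteType K B :=
    .of_surjective (aeval (R := K) v).rangeRestrict (AlgHom.rangeRestrict_surjective _)
  have hmem (j : σ ⊕ σ) : v j ∈ B := ⟨X j, aeval_X v j⟩
  let aB : σ → B := fun i => ⟨a i, hmem (Sum.inl i)⟩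
  have hval (G : MvPolynomial σ K) : B.val (aeval aB G) = aeval a G :=
    comp_aeval_apply _ _ _
  have hunit : IsUnit (aeval aB F) := by
    refine isUnit_aeval_of_dvd_pderiv F aB
      (fun h => left_ne_zero_of_mul_eq_one hw (by rw [← hval, h, map_zero]))
      (fun i => ⟨⟨_, hmem (Sum.inr i)⟩, Subtype.val_injective ?_⟩)
    change B.val _ = B.val (aeval aB F) * (aeval a (pderiv i F) * w)
    rw [hval, hval, mul_left_comm, hw, mul_one]
  obtain ⟨⟨_, q, rfl⟩, hq⟩ := hunit.exists_right_inv
  refine ⟨q, ?_⟩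
  have := congrArg B.val hq
  rwa [map_mul, hval, map_one] at this

theorem exists_eval_mul_eval_logDeriv_eq_one {F : MvPolynomial σ K} (hF : F ≠ 0) :
    ∃ q : MvPolynomial (σ ⊕ σ) K, ∀ x : σ → K, eval x F ≠ 0 →
      eval x F * eval (Sum.elim x fun i => eval x (pderiv i F) / eval x F) q = 1 := by
  let L := Localization.Away F
  have : IsDomain L :=
    IsLocalization.isDomain_localization (powers_le_nonZeroDivisors_of_noZeroDivisors hF)
  let ι : MvPolynomial σ K →ₐ[K] L := IsScalarTower.toAlgHom K _ L
  let w : L := IsLocalization.Away.invSelf F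
  have hw : ι F * w = 1 := IsLocalization.Away.mul_invSelf F
  have hι : aeval (fun i => ι (X i)) = ι := (aeval_unique ι).symm
  obtain ⟨q, hq⟩ := exists_aeval_mul_aeval_logDeriv_eq_one F (fun i => ι (X i)) (w := w)
    (by rwa [hι])
  refine ⟨q, fun x hx => ?_⟩
  let l : L →ₐ[K] K := IsLocalization.Away.liftAlgHom F (f := aeval x)
    (isUnit_iff_ne_zero.2 (by rwa [aeval_eq_eval]))
  have hl (G : MvPolynomial σ K) : l (ι G) = eval x G := by
    simp [l, ι, coe_aeval_eq_eval]
  have hlw : l w = (eval x F)⁻¹ :=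
    eq_inv_of_mul_eq_one_right (by rw [← hl, ← map_mul, hw, map_one])
  have := congrArg l hq
  rw [hι, map_mul, map_one, hl, comp_aeval_apply, aeval_eq_eval] at this
  convert this using 4
  ext (i | i) <;> simp [hl, hlw, div_eq_mul_inv]

end UnitRepresentation

section Lojasiewicz

open MvPolynomial

variable {σ : Type*} [Fintype σ]

theorem exists_abs_eval_le_mul_one_add_norm_pow (q : MvPolynomial σ ℝ) :
    ∃ (C : ℝ) (N : ℕ), 1 ≤ C ∧ ∀ y : σ → ℝ, |eval y q| ≤ C * (1 + ‖y‖) ^ N := by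
  induction q using MvPolynomial.induction_on with
  | C a => exact ⟨|a| + 1, 0, by simp, fun y => by simp⟩
  | add p q hp hq =>
    obtain ⟨C₁, N₁, hC₁, hp⟩ := hp
    obtain ⟨C₂, N₂, hC₂, hq⟩ := hq
    refine ⟨C₁ + C₂, N₁ + N₂, by linarith, fun y => ?_⟩
    have hy : 1 ≤ 1 + ‖y‖ := le_add_of_nonneg_right (norm_nonneg y)
    calc |eval y (p + q)| ≤ |eval y p| + |eval y q| := by rw [map_add]; exact abs_add_le _ _
      _ ≤ C₁ * (1 + ‖y‖) ^ N₁ + C₂ * (1 + ‖y‖) ^ N₂ := add_le_add (hp y) (hq y)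
      _ ≤ C₁ * (1 + ‖y‖) ^ (N₁ + N₂) + C₂ * (1 + ‖y‖) ^ (N₁ + N₂) := by
        gcongr <;> first | exact hy | omega
      _ = (C₁ + C₂) * (1 + ‖y‖) ^ (N₁ + N₂) := by ring
  | mul_X p i hp =>
    obtain ⟨C, N, hC, hp⟩ := hp
    refine ⟨C, N + 1, hC, fun y => ?_⟩
    rw [map_mul, eval_X, abs_mul, pow_succ, ← mul_assoc]
    have hi : |y i| ≤ 1 + ‖y‖ := (norm_le_pi_norm y i).trans (by linarith)
    exact mul_le_mul (hp y) hi (abs_nonneg _) (by positivity)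

theorem exists_one_le_eval_mul_pow (F : MvPolynomial σ ℝ) :
    ∃ (C : ℝ) (N : ℕ), 1 ≤ C ∧ ∀ x : σ → ℝ, 0 < eval x F →
      1 ≤ eval x F *
        (C * (1 + ‖x‖ + ‖fun i => eval x (pderiv i F)‖ / eval x F) ^ N) := by
  rcases eq_or_ne F 0 with rfl | hF
  · exact ⟨1, 0, le_rfl, fun x hx => by simp at hx⟩
  obtain ⟨q, hq⟩ := exists_eval_mul_eval_logDeriv_eq_one hF
  obtain ⟨C, N, hC, hbound⟩ := exists_abs_eval_le_mul_one_add_norm_pow q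
  refine ⟨C, N, hC, fun x hx => ?_⟩
  set g : σ → ℝ := fun i => eval x (pderiv i F)
  have hnorm : ‖Sum.elim x fun i => g i / eval x F‖ ≤ ‖x‖ + ‖g‖ / eval x F := by
    refine (pi_norm_le_iff_of_nonneg (by positivity)).2 (Sum.forall.2 ⟨fun i => ?_, fun i => ?_⟩)
    · exact (norm_le_pi_norm x i).trans (le_add_of_nonneg_right (by positivity))
    · rw [Sum.elim_inr, norm_div, Real.norm_of_nonneg hx.le]
      exact (div_le_div_of_nonneg_right (norm_le_pi_norm g i) hx.le).trans
        (le_add_of_nonneg_left (norm_nonneg x))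
  calc 1 = eval x F * eval (Sum.elim x fun i => g i / eval x F) q := (hq x hx.ne').symm
    _ ≤ eval x F * (C * (1 + ‖Sum.elim x fun i => g i / eval x F‖) ^ N) := by
      gcongr
      exact (le_abs_self _).trans (hbound _)
    _ ≤ eval x F * (C * (1 + ‖x‖ + ‖g‖ / eval x F) ^ N) := by
      gcongr eval x F * (C * ?_ ^ N)
      linarith

theorem exists_eval_pow_le_norm_pderiv_pow (F : MvPolynomial σ ℝ) {R : ℝ} (hR : 0 ≤ R) :
    ∃ (C ε : ℝ) (N : ℕ), 0 ≤ C ∧ 0 < ε ∧ ∀ x : σ → ℝ, ‖x‖ ≤ R → 0 < eval x F → eval x F < ε →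
      eval x F ^ N ≤ (C * ‖fun i => eval x (pderiv i F)‖) ^ (N + 1) := by
  obtain ⟨C, N, hC, hF⟩ := exists_one_le_eval_mul_pow F
  refine ⟨C * (2 + R), 1 / (C * (2 + R) ^ (N + 1)), N, by positivity, by positivity,
    fun x hxR hx hxε => ?_⟩
  set f := eval x F
  set g := ‖fun i => eval x (pderiv i F)‖
  have : 0 ≤ g := norm_nonneg _
  have hone : 1 ≤ f * (C * (1 + R + g / f) ^ (N + 1)) := by
    refine (hF x hx).trans ?_
    gcongr ?_ * (C * ?_)
    refine (pow_le_pow_left₀ (by positivity) (by gcongr) N).trans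
      (pow_le_pow_right₀ ?_ N.le_succ)
    have : 0 ≤ g / f := by positivity
    linarith
  have hfg : 1 ≤ g / f := by
    by_contra! hlt
    refine absurd hone (not_le.2 ?_)
    calc f * (C * (1 + R + g / f) ^ (N + 1)) ≤ f * (C * (2 + R) ^ (N + 1)) := by
          gcongr f * (C * ?_ ^ (N + 1))
          linarith
      _ < 1 := (lt_div_iff₀ (by positivity)).1 hxε
  have hsum : 1 + R + g / f ≤ (2 + R) * (g / f) := by nlinarith
  calc f ^ N = f ^ N * 1 := (mul_one _).symm
    _ ≤ f ^ N * (f * (C * ((2 + R) * (g / f)) ^ (N + 1))) := by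
      gcongr
      exact hone.trans (by gcongr)
    _ = C * ((2 + R) * g) ^ (N + 1) := by
      rw [← mul_div_assoc, div_pow]
      field_simp
      ring
    _ ≤ C ^ (N + 1) * ((2 + R) * g) ^ (N + 1) := by
      gcongr
      exact le_self_pow₀ hC N.succ_ne_zero
    _ = (C * (2 + R) * g) ^ (N + 1) := by rw [← mul_pow, mul_assoc]

theorem exists_eval_rpow_le_norm_pderiv (F : MvPolynomial σ ℝ) {R : ℝ} (hR : 0 ≤ R) :
    ∃ θ ∈ Set.Ico (0 : ℝ) 1, ∃ C ≥ (0 : ℝ), ∃ ε > (0 : ℝ), ∀ x : σ → ℝ, ‖x‖ ≤ R →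
      0 < eval x F → eval x F < ε → eval x F ^ θ ≤ C * ‖fun i => eval x (pderiv i F)‖ := by
  obtain ⟨C, ε, N, hC, hε, hF⟩ := exists_eval_pow_le_norm_pderiv_pow F hR
  refine ⟨N / (N + 1), ⟨by positivity, (div_lt_one (by positivity)).2 (lt_add_one _)⟩, C, hC, ε,
    hε, fun x hxR hx hxε => ?_⟩
  refine (pow_le_pow_iff_left₀ (by positivity) (by positivity) N.succ_ne_zero).1 ?_
  rw [← Real.rpow_mul_natCast hx.le, Nat.cast_succ, div_mul_cancel₀ _ (by positivity),
    Real.rpow_natCast]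
  exact hF x hxR hx hxε

end Lojasiewicz

section Summability

theorem summable_of_sq_le_mul_sub {d ψ : ℕ → ℝ} (hd : ∀ k, 0 ≤ d k) (hψ : ∀ k, 0 ≤ ψ k)
    (hanti : Antitone ψ) (h : ∀ k, d (k + 1) ^ 2 ≤ d k * (ψ k - ψ (k + 1))) : Summable d := by
  have hamgm (k : ℕ) : 2 * d (k + 1) ≤ d k + (ψ k - ψ (k + 1)) := by
    have hdrop : 0 ≤ ψ k - ψ (k + 1) := sub_nonneg.2 (hanti k.le_succ)
    refine le_of_sq_le_sq ?_ (add_nonneg (hd k) hdrop)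
    nlinarith [h k, sq_nonneg (d k - (ψ k - ψ (k + 1)))]
  have htelescope (n : ℕ) : ∑ k ∈ range n, d k ≤ 2 * d 0 - 2 * d n + (ψ 0 - ψ n) := by
    induction n with
    | zero => simp
    | succ n ih => linarith [sum_range_succ d n, hamgm n]
  refine summable_of_sum_range_le (c := 2 * d 0 + ψ 0) hd fun n => ?_
  linarith [htelescope n, hd n, hψ n]

theorem mul_rpow_sub_one_mul_sub_le {s t p : ℝ} (hs : 0 < s) (ht : 0 ≤ t) (hp₀ : 0 ≤ p)
    (hp₁ : p ≤ 1) : p * s ^ (p - 1) * (s - t) ≤ s ^ p - t ^ p := by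
  have hbernoulli := rpow_one_add_le_one_add_mul_self (s := t / s - 1) (by
    linarith [div_nonneg ht hs.le]) hp₀ hp₁
  rw [add_sub_cancel, Real.div_rpow ht hs.le, div_le_iff₀ (by positivity)] at hbernoulli
  rw [Real.rpow_sub_one hs.ne']
  have : p * (s ^ p / s) * (s - t) = -(p * (t / s - 1)) * s ^ p := by
    field_simp
    ring
  linarith

theorem summable_of_rpow_le {s d : ℕ → ℝ} {c C θ : ℝ} (hc : 0 < c) (hC : 0 ≤ C)
    (hθ : θ ∈ Set.Ico (0 : ℝ) 1) (hs : ∀ k, 0 ≤ s k) (hd : ∀ k, 0 ≤ d k)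
    (hdecr : ∀ k, c * d k ^ 2 ≤ s k - s (k + 1))
    (hgrad : ∀ k, 0 < s (k + 1) → s (k + 1) ^ θ ≤ C * d k) : Summable d := by
  have hθ' : 0 < 1 - θ := sub_pos.2 hθ.2
  have hs_anti (k : ℕ) : s (k + 1) ≤ s k :=
    sub_nonneg.1 ((by positivity : 0 ≤ c * d k ^ 2).trans (hdecr k))
  have hanti : Antitone fun k => C / (c * (1 - θ)) * s (k + 1) ^ (1 - θ) := by
    refine antitone_nat_of_succ_le fun k => mul_le_mul_of_nonneg_left ?_ (by positivity)
    exact Real.rpow_le_rpow (hs _) (hs_anti _) hθ'.le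
  refine summable_of_sq_le_mul_sub hd
    (ψ := fun k => C / (c * (1 - θ)) * s (k + 1) ^ (1 - θ)) (fun k => ?_) hanti fun k => ?_
  · have := hs (k + 1)
    positivity
  have hdecr' := hdecr (k + 1)
  rcases (hs (k + 1)).eq_or_lt with hzero | hpos
  · have hd_sq : d (k + 1) ^ 2 ≤ 0 := by nlinarith [hs (k + 2)]
    exact hd_sq.trans (mul_nonneg (hd k) (sub_nonneg.2 (hanti k.le_succ)))
  have hconc := mul_rpow_sub_one_mul_sub_le hpos (hs (k + 2)) hθ'.le (by linarith [hθ.1])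
  rw [sub_sub_cancel_left, Real.rpow_neg hpos.le] at hconc
  have hpow : 0 < s (k + 1) ^ θ := by positivity
  calc d (k + 1) ^ 2 ≤ (s (k + 1) - s (k + 2)) / c := (le_div_iff₀' hc).2 hdecr'
    _ ≤ d k * (C / s (k + 1) ^ θ) * ((s (k + 1) - s (k + 2)) / c) := by
      refine le_mul_of_one_le_left ((div_nonneg ?_ hc.le)) ?_
      · exact sub_nonneg.2 (hs_anti _)
      · rw [← mul_div_assoc, one_le_div hpow, mul_comm]
        exact hgrad k hpos
    _ = d k * (C / (c * (1 - θ)) *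
          ((1 - θ) * (s (k + 1) ^ θ)⁻¹ * (s (k + 1) - s (k + 2)))) := by
      field_simp
    _ ≤ d k * (C / (c * (1 - θ)) * (s (k + 1) ^ (1 - θ) - s (k + 2) ^ (1 - θ))) := by
      have := hd k
      gcongr
    _ = _ := by ring

end Summability

section PolynomialFunctions

open Metric

/-- The algebra of polynomial functions on a real vector space, generated by the linear forms. -/
def polyFunctions (E : Type*) [AddCommGroup E] [Module ℝ E] : Subalgebra ℝ (E → ℝ) :=
  Algebra.adjoin ℝ (Set.range fun ℓ : Module.Dual ℝ E => ⇑ℓ)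

namespace polyFunctions

section Algebraic

variable {E F : Type*} [AddCommGroup E] [Module ℝ E] [AddCommGroup F] [Module ℝ F]

theorem dual_mem (ℓ : Module.Dual ℝ E) : ⇑ℓ ∈ polyFunctions E :=
  Algebra.subset_adjoin ⟨ℓ, rfl⟩

theorem comp_mem {f : F → ℝ} (hf : f ∈ polyFunctions F) {g : E → F}
    (hg : ∀ ℓ : Module.Dual ℝ F, ⇑ℓ ∘ g ∈ polyFunctions E) :
    f ∘ g ∈ polyFunctions E := by
  induction hf using Algebra.adjoin_induction with
  | mem _ h =>
    obtain ⟨ℓ, rfl⟩ := h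
    exact hg ℓ
  | algebraMap r => exact (polyFunctions E).algebraMap_mem r
  | add _ _ _ _ h₁ h₂ => exact add_mem h₁ h₂
  | mul _ _ _ _ h₁ h₂ => exact mul_mem h₁ h₂

theorem comp_linearMap_mem {f : F → ℝ} (hf : f ∈ polyFunctions F) (g : E →ₗ[ℝ] F) :
    f ∘ g ∈ polyFunctions E :=
  comp_mem hf fun ℓ => dual_mem (ℓ.comp g)

theorem exists_mvPolynomial {ι : Type*} (b : Module.Basis ι ℝ E) {f : E → ℝ}
    (hf : f ∈ polyFunctions E) [Finite ι] :
    ∃ P : MvPolynomial ι ℝ, ∀ x, f x = MvPolynomial.eval (b.repr x) P := by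
  have := Fintype.ofFinite ι
  induction hf using Algebra.adjoin_induction with
  | mem _ h =>
    obtain ⟨ℓ, rfl⟩ := h
    refine ⟨∑ i, MvPolynomial.C (ℓ (b i)) * MvPolynomial.X i, fun x => ?_⟩
    change ℓ x = _
    conv_lhs => rw [← b.sum_repr x, map_sum]
    simp only [map_smul, smul_eq_mul, map_sum, map_mul, MvPolynomial.eval_C,
      MvPolynomial.eval_X, mul_comm]
  | algebraMap r => exact ⟨MvPolynomial.C r, fun x => by simp⟩
  | add _ _ _ _ h₁ h₂ =>
    obtain ⟨P, hP⟩ := h₁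
    obtain ⟨Q, hQ⟩ := h₂
    exact ⟨P + Q, fun x => by simp [hP, hQ]⟩
  | mul _ _ _ _ h₁ h₂ =>
    obtain ⟨P, hP⟩ := h₁
    obtain ⟨Q, hQ⟩ := h₂
    exact ⟨P * Q, fun x => by simp [hP, hQ]⟩

end Algebraic

variable {E : Type*} [NormedAddCommGroup E] [NormedSpace ℝ E] [FiniteDimensional ℝ E] {f : E → ℝ}

theorem contDiff (hf : f ∈ polyFunctions E) {n : WithTop ℕ∞} : ContDiff ℝ n f := by
  induction hf using Algebra.adjoin_induction with
  | mem _ h =>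
    obtain ⟨ℓ, rfl⟩ := h
    exact ℓ.toContinuousLinearMap.contDiff
  | algebraMap r => exact contDiff_const
  | add _ _ _ _ h₁ h₂ => exact h₁.add h₂
  | mul _ _ _ _ h₁ h₂ => exact h₁.mul h₂

theorem exists_lipschitzOnWith_fderiv (hf : f ∈ polyFunctions E) (R : ℝ) :
    ∃ K, LipschitzOnWith K (fderiv ℝ f) (closedBall 0 R) := by
  have hfderiv : ContDiff ℝ 1 (fderiv ℝ f) := (contDiff hf (n := 2)).fderiv_right le_rfl
  exact hfderiv.locallyLipschitz.locallyLipschitzOn.exists_lipschitzOnWith_of_compact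
    (isCompact_closedBall 0 R)

theorem hasFDerivAt_eval_repr {ι : Type*} [Fintype ι] (b : Module.Basis ι ℝ E)
    (P : MvPolynomial ι ℝ) (x : E) :
    HasFDerivAt (fun y => MvPolynomial.eval (b.repr y) P)
      (∑ i, MvPolynomial.eval (b.repr x) (MvPolynomial.pderiv i P) •
        (b.coord i).toContinuousLinearMap) x := by
  classical
  induction P using MvPolynomial.induction_on with
  | C a => simpa using hasFDerivAt_const a x
  | add p q hp hq =>
    simpa [add_smul, sum_add_distrib] using hp.fun_add hq
  | mul_X p i hp =>
    have hi : HasFDerivAt (fun y => b.repr y i) (b.coord i).toContinuousLinearMap x :=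
      (b.coord i).toContinuousLinearMap.hasFDerivAt
    simp only [map_mul, MvPolynomial.eval_X]
    refine (hp.fun_mul hi).congr_fderiv ?_
    simp [MvPolynomial.pderiv_X, Pi.single_apply, apply_ite, add_smul, sum_add_distrib,
      smul_sum, mul_smul]

theorem exists_rpow_le_norm_fderiv (hf : f ∈ polyFunctions E) (R : ℝ) :
    ∃ θ ∈ Set.Ico (0 : ℝ) 1, ∃ C ≥ (0 : ℝ), ∃ ε > (0 : ℝ), ∀ x : E, ‖x‖ ≤ R →
      0 < f x → f x < ε → f x ^ θ ≤ C * ‖fderiv ℝ f x‖ := by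
  let b := Module.finBasis ℝ E
  obtain ⟨P, hP⟩ := exists_mvPolynomial b hf
  obtain rfl : f = fun x => MvPolynomial.eval (b.repr x) P := funext hP
  let e : E →L[ℝ] (Fin (Module.finrank ℝ E) → ℝ) := b.equivFunL
  obtain ⟨θ, hθ, C, hC, ε, hε, h⟩ := exists_eval_rpow_le_norm_pderiv P
    (R := ‖e‖ * |R|) (by positivity)
  refine ⟨θ, hθ, C * ∑ i, ‖b i‖, by positivity, ε, hε, fun x hxR hx hxε => ?_⟩
  have hrepr : ‖(b.repr x : Fin (Module.finrank ℝ E) → ℝ)‖ ≤ ‖e‖ * |R| :=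
    (e.le_opNorm x).trans (by gcongr; exact hxR.trans (le_abs_self R))
  refine (h _ hrepr hx hxε).trans ?_
  rw [mul_assoc, mul_comm (∑ i, _)]
  gcongr
  refine (pi_norm_le_iff_of_nonneg (by positivity)).2 fun i => ?_
  have hpartial : fderiv ℝ (fun y => MvPolynomial.eval (b.repr y) P) x (b i) =
      MvPolynomial.eval (b.repr x) (MvPolynomial.pderiv i P) := by
    simp [(hasFDerivAt_eval_repr b P x).fderiv, Finsupp.single_apply]
  rw [← hpartial]
  refine (ContinuousLinearMap.le_opNorm _ _).trans ?_
  gcongr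
  exact single_le_sum (f := fun i => ‖b i‖) (fun _ _ => norm_nonneg _) (mem_univ i)

end polyFunctions

end PolynomialFunctions

section Descent

open Filter Topology

variable {E : Type*} [NormedAddCommGroup E] [NormedSpace ℝ E] [FiniteDimensional ℝ E] {f : E → ℝ}

theorem polyFunctions.exists_tendsto_of_descent (hf : f ∈ polyFunctions E) {x : ℕ → E}
    {R c Λ : ℝ} (hx : ∀ k, ‖x k‖ ≤ R) (hc : 0 < c) (hΛ : 0 ≤ Λ)
    (hdecr : ∀ k, c * ‖x (k + 1) - x k‖ ^ 2 ≤ f (x k) - f (x (k + 1)))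
    (hgrad : ∀ k, ‖fderiv ℝ f (x (k + 1))‖ ≤ Λ * ‖x (k + 1) - x k‖) :
    ∃ y, Tendsto x atTop (𝓝 y) := by
  have hanti : Antitone fun k => f (x k) := antitone_nat_of_succ_le fun k =>
    sub_nonneg.1 ((by positivity : 0 ≤ c * ‖x (k + 1) - x k‖ ^ 2).trans (hdecr k))
  have hbdd : BddBelow (Set.range fun k => f (x k)) :=
    ((isCompact_closedBall (0 : E) R).bddBelow_image (contDiff hf (n := 0)).continuous.continuousOn
      ).mono <| Set.range_subset_iff.2 fun k =>
        Set.mem_image_of_mem f (mem_closedBall_zero_iff.2 (hx k))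
  set ℓ := ⨅ k, f (x k)
  have hlim : Tendsto (fun k => f (x k)) atTop (𝓝 ℓ) := tendsto_atTop_ciInf hanti hbdd
  have hgℓ : f - algebraMap ℝ (E → ℝ) ℓ ∈ polyFunctions E :=
    sub_mem hf ((polyFunctions E).algebraMap_mem ℓ)
  obtain ⟨θ, hθ, C, hC, ε, hε, hloj⟩ := exists_rpow_le_norm_fderiv hgℓ R
  have hfderiv (y : E) : fderiv ℝ (f - algebraMap ℝ (E → ℝ) ℓ) y = fderiv ℝ f y :=
    fderiv_sub_const ℓ
  obtain ⟨N, hN⟩ := eventually_atTop.1 (hlim.eventually_lt_const (lt_add_of_pos_right ℓ hε))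
  have hsummable : Summable fun k => ‖x (k + N + 1) - x (k + N)‖ := by
    refine summable_of_rpow_le (s := fun k => f (x (k + N)) - ℓ) hc (mul_nonneg hC hΛ) hθ
      (fun k => sub_nonneg.2 (ciInf_le hbdd _)) (fun k => norm_nonneg _) (fun k => ?_)
      fun k hpos => ?_
    · rw [sub_sub_sub_cancel_right, add_right_comm k 1 N]
      exact hdecr (k + N)
    · rw [mul_assoc]
      refine (hloj (x (k + 1 + N)) (hx _) hpos ?_).trans ?_
      · exact sub_lt_iff_lt_add'.2 (hN _ (Nat.le_add_left _ _))
      · rw [hfderiv, add_right_comm k 1 N]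
        gcongr
        exact hgrad (k + N)
  refine cauchySeq_tendsto_of_complete (cauchySeq_of_summable_dist ?_)
  refine (summable_nat_add_iff N).1 (hsummable.congr fun k => ?_)
  rw [dist_comm, dist_eq_norm, Nat.succ_eq_add_one]

end Descent

section AlternatingMinimization

open Filter Set Topology

theorem mul_norm_sub_sq_le_of_isMinOn {E : Type*} [NormedAddCommGroup E] [NormedSpace ℝ E]
    {s : Set E} {f : E → ℝ} {m : ℝ} {x y : E} (hf : StrongConvexOn s m f) (hmin : IsMinOn f s y)
    (hx : x ∈ s) (hy : y ∈ s) : m / 4 * ‖x - y‖ ^ 2 ≤ f x - f y := by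
  have hmid : (1 / 2 : ℝ) • x + (1 / 2 : ℝ) • y ∈ s :=
    hf.1 hx hy (by norm_num) (by norm_num) (by norm_num)
  have hconv := hf.2 hx hy (by norm_num : (0 : ℝ) ≤ 1 / 2) (by norm_num : (0 : ℝ) ≤ 1 / 2)
    (by norm_num)
  simp only [smul_eq_mul] at hconv
  linarith [isMinOn_iff.1 hmin _ hmid]

variable {E F : Type*}

/-- `u` and `v` are iterates of alternating minimization of `f`: each step minimizes `f` over the
first block with the second one frozen, then over the second block with the new first one frozen.
The starting point `(u 0, v 0)` is arbitrary. -/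
structure IsAlternatingMinimization (f : E × F → ℝ) (u : ℕ → E) (v : ℕ → F) : Prop where
  isMinOn_left (k : ℕ) : IsMinOn (fun x => f (x, v k)) univ (u (k + 1))
  isMinOn_right (k : ℕ) : IsMinOn (fun y => f (u (k + 1), y)) univ (v (k + 1))

variable [NormedAddCommGroup E] [NormedSpace ℝ E] [NormedAddCommGroup F] [NormedSpace ℝ F]

theorem fderiv_apply_inl_eq_zero_of_isMinOn {f : E × F → ℝ} {x : E} {y : F}
    (hf : DifferentiableAt ℝ f (x, y)) (hmin : IsMinOn (fun x' => f (x', y)) univ x) (w : E) :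
    fderiv ℝ f (x, y) (w, 0) = 0 := by
  have hcomp := HasFDerivAt.comp (f := fun x' => (x', y)) x hf.hasFDerivAt
    (hasFDerivAt_prodMk_left x y)
  exact DFunLike.congr_fun ((hmin.isLocalMin univ_mem).hasFDerivAt_eq_zero hcomp) w

theorem fderiv_apply_inr_eq_zero_of_isMinOn {f : E × F → ℝ} {x : E} {y : F}
    (hf : DifferentiableAt ℝ f (x, y)) (hmin : IsMinOn (fun y' => f (x, y')) univ y) (w : F) :
    fderiv ℝ f (x, y) (0, w) = 0 := by
  have hcomp := HasFDerivAt.comp (f := fun y' => (x, y')) y hf.hasFDerivAt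
    (hasFDerivAt_prodMk_right x y)
  exact DFunLike.congr_fun ((hmin.isLocalMin univ_mem).hasFDerivAt_eq_zero hcomp) w

namespace IsAlternatingMinimization

variable {f : E × F → ℝ} {u : ℕ → E} {v : ℕ → F}

theorem mul_norm_sub_sq_le {c : ℝ} (h : IsAlternatingMinimization f u v) (hc : 0 ≤ c)
    (hu : ∀ y, StrongConvexOn univ c fun x => f (x, y))
    (hv : ∀ x, StrongConvexOn univ c fun y => f (x, y)) (k : ℕ) :
    c / 4 * ‖(u (k + 1), v (k + 1)) - (u k, v k)‖ ^ 2 ≤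
      f (u k, v k) - f (u (k + 1), v (k + 1)) := by
  have hleft : c / 4 * ‖u (k + 1) - u k‖ ^ 2 ≤ f (u k, v k) - f (u (k + 1), v k) := by
    rw [norm_sub_rev]
    exact mul_norm_sub_sq_le_of_isMinOn (hu _) (h.isMinOn_left k) (mem_univ _) (mem_univ _)
  have hright : c / 4 * ‖v (k + 1) - v k‖ ^ 2 ≤
      f (u (k + 1), v k) - f (u (k + 1), v (k + 1)) := by
    rw [norm_sub_rev]
    exact mul_norm_sub_sq_le_of_isMinOn (hv _) (h.isMinOn_right k) (mem_univ _) (mem_univ _)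
  have hleft₀ : 0 ≤ c / 4 * ‖u (k + 1) - u k‖ ^ 2 := by positivity
  have hright₀ : 0 ≤ c / 4 * ‖v (k + 1) - v k‖ ^ 2 := by positivity
  rw [Prod.mk_sub_mk, Prod.norm_mk]
  rcases max_choice ‖u (k + 1) - u k‖ ‖v (k + 1) - v k‖ with hmax | hmax <;> rw [hmax] <;> linarith

theorem norm_fderiv_le (h : IsAlternatingMinimization f u v) (hf : Differentiable ℝ f) (k : ℕ) :
    ‖fderiv ℝ f (u (k + 1), v (k + 1))‖ ≤
      ‖fderiv ℝ f (u (k + 1), v (k + 1)) - fderiv ℝ f (u (k + 1), v k)‖ := by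
  refine ContinuousLinearMap.opNorm_le_bound _ (norm_nonneg _) fun z => ?_
  have hz : fderiv ℝ f (u (k + 1), v (k + 1)) z =
      (fderiv ℝ f (u (k + 1), v (k + 1)) - fderiv ℝ f (u (k + 1), v k)) (z.1, 0) := by
    rw [_root_.sub_apply,
      fderiv_apply_inl_eq_zero_of_isMinOn (hf _) (h.isMinOn_left k), sub_zero,
      ← Prod.fst_add_snd z, map_add, fderiv_apply_inr_eq_zero_of_isMinOn (hf _) (h.isMinOn_right k)]
    simp
  have hnorm : ‖(z.1, (0 : F))‖ ≤ ‖z‖ := by simpa using norm_fst_le z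
  rw [hz]
  exact (ContinuousLinearMap.le_opNorm _ _).trans (by gcongr)

variable [FiniteDimensional ℝ E] [FiniteDimensional ℝ F]

theorem exists_tendsto {c : ℝ} (h : IsAlternatingMinimization f u v)
    (hf : f ∈ polyFunctions (E × F)) (hc : 0 < c)
    (hu : ∀ y, StrongConvexOn univ c fun x => f (x, y))
    (hv : ∀ x, StrongConvexOn univ c fun y => f (x, y))
    (hbdd : Bornology.IsBounded {z | f z ≤ f (u 0, v 0)}) :
    ∃ x y, Tendsto u atTop (𝓝 x) ∧ Tendsto v atTop (𝓝 y) := by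
  have hdecr := h.mul_norm_sub_sq_le hc.le hu hv
  have hanti : Antitone fun k => f (u k, v k) := antitone_nat_of_succ_le fun k =>
    sub_nonneg.1 (le_trans (by positivity) (hdecr k))
  obtain ⟨R, hR⟩ := hbdd.exists_norm_le
  have hbound (k : ℕ) : ‖(u k, v k)‖ ≤ R := hR _ (hanti k.zero_le)
  obtain ⟨K, hK⟩ := polyFunctions.exists_lipschitzOnWith_fderiv hf R
  have hgrad (k : ℕ) : ‖fderiv ℝ f (u (k + 1), v (k + 1))‖ ≤
      K * ‖(u (k + 1), v (k + 1)) - (u k, v k)‖ := by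
    have hmem : (u (k + 1), v k) ∈ Metric.closedBall 0 R := mem_closedBall_zero_iff.2 <|
      max_le
      ((norm_fst_le (u (k + 1), v (k + 1))).trans (hbound (k + 1)))
      ((norm_snd_le (u k, v k)).trans (hbound k))
    calc ‖fderiv ℝ f (u (k + 1), v (k + 1))‖
        ≤ ‖fderiv ℝ f (u (k + 1), v (k + 1)) - fderiv ℝ f (u (k + 1), v k)‖ :=
          h.norm_fderiv_le ((polyFunctions.contDiff hf (n := 1)).differentiable one_ne_zero) k
      _ ≤ K * ‖(u (k + 1), v (k + 1)) - (u (k + 1), v k)‖ :=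
          hK.norm_sub_le (mem_closedBall_zero_iff.2 (hbound _)) hmem
      _ ≤ K * ‖(u (k + 1), v (k + 1)) - (u k, v k)‖ := by
          gcongr
          simp
  obtain ⟨⟨x, y⟩, hlim⟩ :=
    polyFunctions.exists_tendsto_of_descent hf hbound (by positivity) K.2 hdecr hgrad
  exact ⟨x, y, hlim.fst_nhds, hlim.snd_nhds⟩

end IsAlternatingMinimization

end AlternatingMinimization

section BilinearAndQuadratic

namespace polyFunctions

theorem bilin_mem {E F : Type*} [AddCommGroup E] [Module ℝ E] [FiniteDimensional ℝ E]
    [AddCommGroup F] [Module ℝ F] (B : E →ₗ[ℝ] F →ₗ[ℝ] ℝ) :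
    (fun z : E × F => B z.1 z.2) ∈ polyFunctions (E × F) := by
  let b := Module.finBasis ℝ E
  have hexpand : (fun z : E × F => B z.1 z.2) =
      ∑ i, ⇑(b.coord i ∘ₗ LinearMap.fst ℝ E F) * ⇑(B (b i) ∘ₗ LinearMap.snd ℝ E F) := by
    ext z
    conv_lhs => rw [← b.sum_repr z.1, map_sum, LinearMap.sum_apply]
    simp
  rw [hexpand]
  exact sum_mem fun i _ => mul_mem (dual_mem _) (dual_mem _)

theorem norm_sub_sq_mem {E ι : Type*} [AddCommGroup E] [Module ℝ E] [Fintype ι]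
    (A : E →ₗ[ℝ] EuclideanSpace ℝ ι) (d : EuclideanSpace ℝ ι) :
    (fun x => ‖A x - d‖ ^ 2) ∈ polyFunctions E := by
  have hexpand : (fun x => ‖A x - d‖ ^ 2) =
      ∑ i, (⇑((EuclideanSpace.proj i : EuclideanSpace ℝ ι →L[ℝ] ℝ).toLinearMap ∘ₗ A) -
        algebraMap ℝ (E → ℝ) (d i)) ^ 2 := by
    ext x
    simp [EuclideanSpace.norm_sq_eq]
  rw [hexpand]
  exact sum_mem fun i _ => pow_mem (sub_mem (dual_mem _) (Subalgebra.algebraMap_mem _ _)) 2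

end polyFunctions

end BilinearAndQuadratic

section MatrixFactorization

open Set Filter Topology
open scoped Matrix.Norms.Frobenius

variable {m n r : ℕ}

theorem frobSq_eq_norm_sq (X : Matrix (Fin m) (Fin n) ℝ) : frobSq X = ‖X‖ ^ 2 := by
  rw [frobenius_norm_def, ← Real.sqrt_eq_rpow, Real.sq_sqrt (by positivity)]
  simp [frobSq]

theorem frobSq_mem_polyFunctions :
    (frobSq : Matrix (Fin m) (Fin n) ℝ → ℝ) ∈ polyFunctions (Matrix (Fin m) (Fin n) ℝ) := by
  have hexpand : (frobSq : Matrix (Fin m) (Fin n) ℝ → ℝ) =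
      ∑ i, ∑ j, ⇑(Matrix.entryLinearMap ℝ ℝ i j) ^ 2 := by
    ext X
    simp [frobSq]
  rw [hexpand]
  exact sum_mem fun i _ => sum_mem fun j _ => pow_mem (polyFunctions.dual_mem _) 2

theorem strongConvexOn_half_frobSq :
    StrongConvexOn univ 1 fun X : Matrix (Fin m) (Fin n) ℝ => 1 / 2 * frobSq X := by
  refine ⟨convex_univ, fun X _ Y _ a b _ _ hab => le_of_eq ?_⟩
  obtain rfl : b = 1 - a := by linarith
  simp only [← frobSq_eq_norm_sq]
  simp only [frobSq, Matrix.add_apply, Matrix.sub_apply, Matrix.smul_apply, smul_eq_mul, mul_sum,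
    ← sum_add_distrib, ← sum_sub_distrib]
  refine sum_congr rfl fun i _ => sum_congr rfl fun j _ => ?_
  ring

/-- The regularized factorization objective `(1/2)(‖U‖_F² + ‖V‖_F²) + φ(UV)` of a loss `φ` on
matrices, as a function of the pair `(U, V)`. -/
noncomputable def factorizationObjective (φ : Matrix (Fin m) (Fin n) ℝ → ℝ)
    (z : Matrix (Fin m) (Fin r) ℝ × Matrix (Fin r) (Fin n) ℝ) : ℝ :=
  1 / 2 * (frobSq z.1 + frobSq z.2) + φ (z.1 * z.2)

variable {φ : Matrix (Fin m) (Fin n) ℝ → ℝ}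

theorem factorizationObjective_mem_polyFunctions
    (hφ : φ ∈ polyFunctions (Matrix (Fin m) (Fin n) ℝ)) :
    factorizationObjective (r := r) φ ∈ polyFunctions _ := by
  have hfst := polyFunctions.comp_linearMap_mem (frobSq_mem_polyFunctions (m := m) (n := r))
    (LinearMap.fst ℝ _ (Matrix (Fin r) (Fin n) ℝ))
  have hsnd := polyFunctions.comp_linearMap_mem (frobSq_mem_polyFunctions (m := r) (n := n))
    (LinearMap.snd ℝ (Matrix (Fin m) (Fin r) ℝ) _)
  have hmul := polyFunctions.comp_mem hφ
    (g := fun z : Matrix (Fin m) (Fin r) ℝ × Matrix (Fin r) (Fin n) ℝ => z.1 * z.2) fun ℓ =>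
      polyFunctions.bilin_mem <| LinearMap.mk₂ ℝ (fun U V => ℓ (U * V))
        (by simp [Matrix.add_mul]) (by simp) (by simp [Matrix.mul_add]) (by simp)
  exact add_mem (Subalgebra.smul_mem _ (add_mem hfst hsnd) (1 / 2)) hmul

theorem strongConvexOn_half_frobSq_add {g : Matrix (Fin m) (Fin n) ℝ → ℝ}
    (hg : ConvexOn ℝ univ g) : StrongConvexOn univ 1 fun X => 1 / 2 * frobSq X + g X := by
  simpa [StrongConvexOn] using! strongConvexOn_half_frobSq.add (uniformConvexOn_zero.2 hg)

theorem strongConvexOn_factorizationObjective_left (hφ : ConvexOn ℝ univ φ)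
    (V : Matrix (Fin r) (Fin n) ℝ) :
    StrongConvexOn univ 1 fun U => factorizationObjective φ (U, V) := by
  have hconv : ConvexOn ℝ univ fun U : Matrix (Fin m) (Fin r) ℝ => φ (U * V) :=
    hφ.comp_linearMap (mulRightLinearMap (Fin m) ℝ V)
  convert strongConvexOn_half_frobSq_add (hconv.add_const (1 / 2 * frobSq V)) using 2 with U
  simp only [factorizationObjective, Pi.add_apply]
  ring

theorem strongConvexOn_factorizationObjective_right (hφ : ConvexOn ℝ univ φ)
    (U : Matrix (Fin m) (Fin r) ℝ) :
    StrongConvexOn univ 1 fun V => factorizationObjective φ (U, V) := by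
  have hconv : ConvexOn ℝ univ fun V : Matrix (Fin r) (Fin n) ℝ => φ (U * V) :=
    hφ.comp_linearMap (mulLeftLinearMap (Fin n) ℝ U)
  convert strongConvexOn_half_frobSq_add (hconv.add_const (1 / 2 * frobSq U)) using 2 with V
  simp only [factorizationObjective, Pi.add_apply]
  ring

theorem isBounded_factorizationObjective_le (hφ : BddBelow (range φ)) (a : ℝ) :
    Bornology.IsBounded {z | factorizationObjective (r := r) φ z ≤ a} := by
  obtain ⟨B, hB⟩ := hφ
  refine isBounded_iff_forall_norm_le.2 ⟨√(2 * (a - B)), fun z hz => ?_⟩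
  have hBz : B ≤ φ (z.1 * z.2) := hB (mem_range_self _)
  simp only [mem_ofPred_eq, factorizationObjective, frobSq_eq_norm_sq] at hz
  refine max_le (Real.le_sqrt_of_sq_le ?_) (Real.le_sqrt_of_sq_le ?_) <;>
    linarith [sq_nonneg ‖z.1‖, sq_nonneg ‖z.2‖]

theorem objF_iterates_converge_general (hφ : φ ∈ polyFunctions (Matrix (Fin m) (Fin n) ℝ))
    (hconv : ConvexOn ℝ univ φ) (hbdd : BddBelow (range φ))
    {U : ℕ → Matrix (Fin m) (Fin r) ℝ} {V : ℕ → Matrix (Fin r) (Fin n) ℝ}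
    (h : IsAlternatingMinimization (factorizationObjective φ) U V) :
    ∃ Ustar Vstar, Tendsto U atTop (𝓝 Ustar) ∧ Tendsto V atTop (𝓝 Vstar) :=
  h.exists_tendsto (factorizationObjective_mem_polyFunctions hφ) one_pos
    (strongConvexOn_factorizationObjective_left hconv)
    (strongConvexOn_factorizationObjective_right hconv) (isBounded_factorizationObjective_le hbdd _)

end MatrixFactorization

section DataFit

open Set

theorem convexOn_norm_sub_sq {E G : Type*} [AddCommGroup E] [Module ℝ E] [NormedAddCommGroup G]
    [NormedSpace ℝ G] (A : E →ₗ[ℝ] G) (d : G) : ConvexOn ℝ univ fun x => ‖A x - d‖ ^ 2 := by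
  simp only [← dist_eq_norm]
  exact ((convexOn_dist d convex_univ).comp_linearMap A).pow (fun _ _ => dist_nonneg) 2

variable {m n p : ℕ} (Ω : Finset (Fin m × Fin n)) (M : Matrix (Fin m) (Fin n) ℝ)
  (L : Matrix (Fin m) (Fin n) ℝ →ₗ[ℝ] EuclideanSpace ℝ (Fin p)) (b : EuclideanSpace ℝ (Fin p))
  (μ ν : ℝ)

/-- The data-fitting part of `objF`, as a function of the product `X = UV`. -/
noncomputable def dataFit (X : Matrix (Fin m) (Fin n) ℝ) : ℝ :=
  μ / 2 * ∑ ij ∈ Ω, (X - M) ij.1 ij.2 ^ 2 + ν / 2 * ‖L X - b‖ ^ 2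

theorem objF_eq_factorizationObjective {r : ℕ} (U : Matrix (Fin m) (Fin r) ℝ)
    (V : Matrix (Fin r) (Fin n) ℝ) :
    objF Ω M L b μ ν U V = factorizationObjective (dataFit Ω M L b μ ν) (U, V) :=
  add_assoc _ _ _

theorem dataFit_mem_polyFunctions :
    dataFit Ω M L b μ ν ∈ polyFunctions (Matrix (Fin m) (Fin n) ℝ) := by
  have hentries : (fun X : Matrix (Fin m) (Fin n) ℝ => ∑ ij ∈ Ω, (X - M) ij.1 ij.2 ^ 2) ∈
      polyFunctions (Matrix (Fin m) (Fin n) ℝ) := by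
    have hexpand : (fun X : Matrix (Fin m) (Fin n) ℝ => ∑ ij ∈ Ω, (X - M) ij.1 ij.2 ^ 2) =
        ∑ ij ∈ Ω, (⇑(entryLinearMap ℝ ℝ ij.1 ij.2) -
          algebraMap ℝ (Matrix (Fin m) (Fin n) ℝ → ℝ) (M ij.1 ij.2)) ^ 2 := by
      ext X
      simp
    rw [hexpand]
    exact sum_mem fun ij _ =>
      pow_mem (sub_mem (polyFunctions.dual_mem _) (Subalgebra.algebraMap_mem _ _)) 2
  exact add_mem (Subalgebra.smul_mem _ hentries (μ / 2))
    (Subalgebra.smul_mem _ (polyFunctions.norm_sub_sq_mem L b) (ν / 2))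

theorem convexOn_dataFit {μ ν : ℝ} (hμ : 0 ≤ μ) (hν : 0 ≤ ν) :
    ConvexOn ℝ univ (dataFit Ω M L b μ ν) := by
  have hentries : ConvexOn ℝ univ (∑ ij ∈ Ω, fun X : Matrix (Fin m) (Fin n) ℝ =>
      (X - M) ij.1 ij.2 ^ 2) := by
    refine sum_induction _ (ConvexOn ℝ univ) (fun _ _ => ConvexOn.add)
      (convexOn_const 0 convex_univ) fun ij _ => ?_
    simpa using convexOn_norm_sub_sq (entryLinearMap ℝ ℝ ij.1 ij.2) (M ij.1 ij.2)
  refine ((hentries.smul (by positivity : 0 ≤ μ / 2)).add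
    ((convexOn_norm_sub_sq L b).smul (by positivity : 0 ≤ ν / 2))).congr fun X _ => ?_
  simp [dataFit]

theorem dataFit_nonneg {μ ν : ℝ} (hμ : 0 ≤ μ) (hν : 0 ≤ ν) (X : Matrix (Fin m) (Fin n) ℝ) :
    0 ≤ dataFit Ω M L b μ ν X := by
  unfold dataFit
  positivity

end DataFit

/-- Convergence of the alternating-minimization iterates. -/
theorem objF_iterates_converge {m n r p : ℕ} (Ω : Finset (Fin m × Fin n)) (M : Matrix (Fin m) (Fin n) ℝ)
    (L : Matrix (Fin m) (Fin n) ℝ →ₗ[ℝ] EuclideanSpace ℝ (Fin p))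
    (b : EuclideanSpace ℝ (Fin p)) (μ ν : ℝ) (hμ : 0 < μ) (hν : 0 < ν)
    (U : ℕ → Matrix (Fin m) (Fin r) ℝ) (V : ℕ → Matrix (Fin r) (Fin n) ℝ)
    (hUstep : ∀ (k : ℕ) (U' : Matrix (Fin m) (Fin r) ℝ),
      objF Ω M L b μ ν (U (k + 1)) (V k) ≤ objF Ω M L b μ ν U' (V k))
    (hVstep : ∀ (k : ℕ) (V' : Matrix (Fin r) (Fin n) ℝ),
      objF Ω M L b μ ν (U (k + 1)) (V (k + 1)) ≤ objF Ω M L b μ ν (U (k + 1)) V') :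
    ∃ (Ustar : Matrix (Fin m) (Fin r) ℝ) (Vstar : Matrix (Fin r) (Fin n) ℝ),
      Filter.Tendsto U Filter.atTop (nhds Ustar) ∧
        Filter.Tendsto V Filter.atTop (nhds Vstar) := by
  simp only [objF_eq_factorizationObjective] at hUstep hVstep
  exact objF_iterates_converge_general (dataFit_mem_polyFunctions Ω M L b μ ν)
    (convexOn_dataFit Ω M L b hμ.le hν.le)
    ⟨0, Set.forall_mem_range.2 (dataFit_nonneg Ω M L b hμ.le hν.le)⟩
    ⟨fun k U' _ => hUstep k U', fun k V' _ => hVstep k V'⟩
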